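/- Let V be a finite set of even cardinality, let c be a coloring assigning each unordered pair of distinct elements of V a color in {1,2,3}, and let M be a round-maximal perfect matching of V. Then there do not exist vertices u and v such that c({u,v}) = 1, the M-pair containing u has color 2, and the M-pair containing v has color 3. -/

import Mathlib

/-!
Write `f = {u, x}` and `g = {v, y}`. Exchanging the pairs `f, g` of `M` for `{u, v}, {x, y}` gives
another perfect matching. The exchange removes one pair of color `2` and one of color `3`, and adds
one of color `1` and one of unknown color. If `{x, y}` has color `1` or `2`, then `m₁ + m₂` grows
by one; if it has color `3`, then `m₁ + m₂` is unchanged and `m₁` grows by one. Either way `M` is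
not round-maximal.
-/

/-- `M` is a perfect matching of the vertex set `V`: a partition of `V` into pairs,
viewed as a finset of non-diagonal unordered pairs covering each vertex exactly once. -/
def IsPM {V : Type*} (M : Finset (Sym2 V)) : Prop :=
  (∀ e ∈ M, ¬ e.IsDiag) ∧ ∀ x : V, ∃! e : Sym2 V, e ∈ M ∧ x ∈ e

/-- `mcount c M i` is the number of pairs of `M` having color `i` under the coloring `c`. -/
def mcount {V : Type*} (c : Sym2 V → ℕ) (M : Finset (Sym2 V)) (i : ℕ) : ℕ :=
  (M.filter fun e => c e = i).card

/-- `M` is a round-maximal perfect matching: it lexicographically maximizes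
`(m₁ + m₂, m₁)` among all perfect matchings of `V`. -/
def RoundMaximal {V : Type*} (c : Sym2 V → ℕ) (M : Finset (Sym2 V)) : Prop :=
  IsPM M ∧ ∀ M' : Finset (Sym2 V), IsPM M' →
    mcount c M' 1 + mcount c M' 2 < mcount c M 1 + mcount c M 2 ∨
    (mcount c M' 1 + mcount c M' 2 = mcount c M 1 + mcount c M 2 ∧
      mcount c M' 1 ≤ mcount c M 1)

/-- An edge `e` (a non-diagonal pair not in `M`) is free with respect to `M` and `c`
if `c e` is strictly less than the color of the `M`-pair containing at least one of
the endpoints of `e`. -/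
def IsFreeEdge {V : Type*} (c : Sym2 V → ℕ) (M : Finset (Sym2 V)) (e : Sym2 V) : Prop :=
  e ∉ M ∧ ¬ e.IsDiag ∧ ∃ (x : V) (f : Sym2 V), x ∈ e ∧ f ∈ M ∧ x ∈ f ∧ c e < c f

/-- Two pairs of a perfect matching sharing a vertex coincide. -/
theorem IsPM.eq_of_mem {V : Type*} {M : Finset (Sym2 V)} (h : IsPM M) {e e' : Sym2 V} {w : V}
    (he : e ∈ M) (he' : e' ∈ M) (hw : w ∈ e) (hw' : w ∈ e') : e = e' :=
  (h.2 w).unique ⟨he, hw⟩ ⟨he', hw'⟩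

theorem mcount_insert {V : Type*} [DecidableEq V] (c : Sym2 V → ℕ) {M : Finset (Sym2 V)}
    {e : Sym2 V} (he : e ∉ M) (i : ℕ) :
    mcount c (insert e M) i = mcount c M i + if c e = i then 1 else 0 := by
  unfold mcount
  rw [Finset.filter_insert]
  split_ifs with h
  · rw [Finset.card_insert_of_notMem (by simp [he])]
  · rfl

/-- Exchanging the pairs `{u, x}, {v, y}` of a perfect matching for `{u, v}, {x, y}` gives a
perfect matching; `K` is the common part of the two matchings. -/
theorem IsPM.exchange {V : Type*} [DecidableEq V] {K : Finset (Sym2 V)} {u v x y : V}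
    (h : IsPM (insert s(u, x) (insert s(v, y) K))) (hne : s(u, x) ≠ s(v, y))
    (hf : s(u, x) ∉ K) (hg : s(v, y) ∉ K) :
    IsPM (insert s(u, v) (insert s(x, y) K)) ∧ s(u, v) ∉ insert s(x, y) K ∧ s(x, y) ∉ K := by
  have fM : s(u, x) ∈ insert s(u, x) (insert s(v, y) K) := by simp
  have gM : s(v, y) ∈ insert s(u, x) (insert s(v, y) K) := by simp
  have KM : ∀ e ∈ K, e ∈ insert s(u, x) (insert s(v, y) K) := fun e he => by simp [he]
  have dfg : ∀ w, w ∈ s(u, x) → w ∉ s(v, y) := fun w h1 h2 => hne (h.eq_of_mem fM gM h1 h2)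
  have dfK : ∀ e ∈ K, ∀ w, w ∈ s(u, x) → w ∉ e := fun e he w h1 h2 =>
    hf (h.eq_of_mem fM (KM e he) h1 h2 ▸ he)
  have dgK : ∀ e ∈ K, ∀ w, w ∈ s(v, y) → w ∉ e := fun e he w h1 h2 =>
    hg (h.eq_of_mem gM (KM e he) h1 h2 ▸ he)
  have hux : u ≠ x := by simpa using h.1 _ fM
  have hvy : v ≠ y := by simpa using h.1 _ gM
  have huv : u ≠ v := fun e => dfg u (by simp) (by simp [e])
  have huy : u ≠ y := fun e => dfg u (by simp) (by simp [e])
  have hxv : x ≠ v := fun e => dfg x (by simp) (by simp [e])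
  have hxy : x ≠ y := fun e => dfg x (by simp) (by simp [e])
  have uK : ∀ e ∈ K, u ∉ e := fun e he => dfK e he u (by simp)
  have xK : ∀ e ∈ K, x ∉ e := fun e he => dfK e he x (by simp)
  have vK : ∀ e ∈ K, v ∉ e := fun e he => dgK e he v (by simp)
  have yK : ∀ e ∈ K, y ∉ e := fun e he => dgK e he y (by simp)
  refine ⟨⟨?_, ?_⟩, ?_, fun hk => xK _ hk (by simp)⟩
  · intro e he
    simp only [Finset.mem_insert] at he
    rcases he with rfl | rfl | he
    · simpa using huv
    · simpa using hxy
    · exact h.1 e (KM e he)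
  · intro w
    by_cases h1 : w = u ∨ w = v
    · refine ⟨s(u, v), ⟨by simp, by simpa using h1⟩, ?_⟩
      rintro e ⟨he, hw⟩
      simp only [Finset.mem_insert] at he
      rcases he with rfl | rfl | he
      · rfl
      · rw [Sym2.mem_iff] at hw; grind
      · grind
    · by_cases h2 : w = x ∨ w = y
      · refine ⟨s(x, y), ⟨by simp, by simpa using h2⟩, ?_⟩
        rintro e ⟨he, hw⟩
        simp only [Finset.mem_insert] at he
        rcases he with rfl | rfl | he
        · rw [Sym2.mem_iff] at hw; grind
        · rfl
        · grind
      · obtain ⟨e, ⟨he, hw⟩, -⟩ := h.2 w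
        have heK : e ∈ K := by
          simp only [Finset.mem_insert] at he
          rcases he with rfl | rfl | he
          · rw [Sym2.mem_iff] at hw; grind
          · rw [Sym2.mem_iff] at hw; grind
          · exact he
        refine ⟨e, ⟨by simp [heK], hw⟩, ?_⟩
        rintro e' ⟨he', hw'⟩
        simp only [Finset.mem_insert] at he'
        rcases he' with rfl | rfl | he'
        · rw [Sym2.mem_iff] at hw'; grind
        · rw [Sym2.mem_iff] at hw'; grind
        · exact h.eq_of_mem (KM _ he') (KM _ heK) hw' hw
  · intro hk
    rw [Finset.mem_insert] at hk
    rcases hk with hk | hk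
    · have : u ∈ s(x, y) := hk ▸ Sym2.mem_mk_left u v
      rw [Sym2.mem_iff] at this; grind
    · exact uK _ hk (by simp)

/-- Let `V` be a finite set of even cardinality, `c` a coloring of edges by colors in
`{1,2,3}`, and `M` a round-maximal perfect matching. Then there do not exist vertices
`u` and `v` such that `c {u,v} = 1`, the `M`-pair containing `u` has color `2`, and
the `M`-pair containing `v` has color `3`. -/
theorem stmt_12 {V : Type*} [Fintype V] [DecidableEq V]
    (hV : Even (Fintype.card V)) (c : Sym2 V → ℕ)
    (hc : ∀ e : Sym2 V, ¬ e.IsDiag → c e ∈ ({1, 2, 3} : Set ℕ))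
    (M : Finset (Sym2 V)) (hM : RoundMaximal c M) :
    ¬ ∃ (u v : V) (f g : Sym2 V),
        f ∈ M ∧ g ∈ M ∧ u ∈ f ∧ v ∈ g ∧ c f = 2 ∧ c g = 3 ∧ c s(u, v) = 1 := by
  rintro ⟨u, v, f, g, hf, hg, hu, hv, cf, cg, cuv⟩
  obtain ⟨x, rfl⟩ := hu
  obtain ⟨y, rfl⟩ := hv
  have hne : s(u, x) ≠ s(v, y) := fun e => by rw [e] at cf; omega
  obtain ⟨K, hfK, hgK, rfl⟩ : ∃ K : Finset (Sym2 V), s(u, x) ∉ K ∧ s(v, y) ∉ K ∧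
      M = insert s(u, x) (insert s(v, y) K) := by
    refine ⟨(M.erase s(u, x)).erase s(v, y), by simp, by simp, ?_⟩
    rw [Finset.insert_erase (by simp [hg, hne.symm]), Finset.insert_erase hf]
  obtain ⟨hPM, hn1, hn2⟩ := hM.1.exchange hne hfK hgK
  have hcxy := hc s(x, y) (hPM.1 _ (by simp))
  have hmax := hM.2 _ hPM
  have hn3 : s(u, x) ∉ insert s(v, y) K := by simp [hne, hfK]
  simp only [mcount_insert c hn1, mcount_insert c hn2, mcount_insert c hn3, mcount_insert c hgK,
    cf, cg, cuv] at hmax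
  simp only [Set.mem_insert_iff, Set.mem_singleton_iff] at hcxy
  rcases hcxy with h | h | h <;> simp [h] at hmax <;> omega
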